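/- Let S be a complete Noetherian local domain of prime characteristic p with perfect residue field, and let m = dim S. Then S, viewed as a module over itself via the Frobenius endomorphism f : S → S (i.e. the module ᶠS with action s · x = s^p x), is a torsion-free module of generic rank p^m over S; consequently there is a short exact sequence of S-modules 0 → S^{p^m} → ᶠS → Q → 0 in which Q is a finitely generated S-module with dim Q < m. -/

import Mathlib

open IsLocalRing

/-- An `R`-module `M`, with scalars restricted along the `e`-th iterated Frobenius
`r ↦ r^{p^e}` (so `r • x = r^{p^e} • x`). -/
def FrobRestrict (R : Type*) [CommSemiring R] (p e : ℕ) [ExpChar R p]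
    (M : Type*) [AddCommGroup M] [Module R M] : Type _ := M

instance FrobRestrict.instAddCommGroup (R : Type*) [CommSemiring R] (p e : ℕ) [ExpChar R p]
    (M : Type*) [AddCommGroup M] [Module R M] : AddCommGroup (FrobRestrict R p e M) :=
  inferInstanceAs (AddCommGroup M)

instance FrobRestrict.instModule (R : Type*) [CommSemiring R] (p e : ℕ) [ExpChar R p]
    (M : Type*) [AddCommGroup M] [Module R M] : Module R (FrobRestrict R p e M) :=
  Module.compHom M (iterateFrobenius R p e)



theorem exists_coeffField (S : Type*) [CommRing S] [IsLocalRing S]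
    (hcomplete : IsAdicComplete (maximalIdeal S) S)
    (p : ℕ) [Fact p.Prime] [CharP S p]
    [ExpChar (ResidueField S) p] [PerfectRing (ResidueField S) p] :
    ∃ τ : ResidueField S →+* S, ∀ c, residue S (τ c) = c := by
  have : CharP (ResidueField S) p := by
    have hp := (Fact.out : p.Prime)
    rcases ‹ExpChar (ResidueField S) p› with _ | _
    · exact absurd rfl hp.ne_one
    · assumption
  have : CharP (S ⧸ maximalIdeal S) p := this
  have hb : Function.Bijective (Perfection.map p (Ideal.Quotient.mk (maximalIdeal S))) :=
    (Perfection.quotientMulEquiv p (maximalIdeal S)).bijective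
  let e := RingEquiv.ofBijective _ hb
  have : PerfectRing (S ⧸ maximalIdeal S) p := ‹PerfectRing (ResidueField S) p›
  let l : (S ⧸ maximalIdeal S) →+* Perfection (S ⧸ maximalIdeal S) p :=
    Perfection.lift p (S ⧸ maximalIdeal S) (S ⧸ maximalIdeal S) (RingHom.id _)
  refine ⟨((Perfection.coeff S p 0).comp (e.symm : Perfection (S ⧸ maximalIdeal S) p →+* Perfection S p)).comp l, fun c => ?_⟩
  change Ideal.Quotient.mk (maximalIdeal S) (Perfection.coeff S p 0 (e.symm (l c))) = c
  rw [← Perfection.coeff_map]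
  have : Perfection.map p (Ideal.Quotient.mk (maximalIdeal S)) (e.symm (l c)) = l c := e.apply_symm_apply (l c)
  rw [this]
  have h2 := RingHom.congr_fun ((Perfection.lift p (S ⧸ maximalIdeal S) (S ⧸ maximalIdeal S)).symm_apply_apply (RingHom.id _)) c
  exact h2

section tower
variable {R B M : Type*} [CommRing R] [IsDomain R] [CommRing B] [IsDomain B] [Algebra R B]
  [AddCommGroup M] [Module B M]

/-- A maximal free submodule with torsion quotient. -/
theorem exists_free_sub [Module.Finite B M] (n : ℕ) (hn : Module.finrank B M = n) :
    ∃ f : (Fin n → B) →ₗ[B] M, Function.Injective f ∧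
      ∀ x : M ⧸ LinearMap.range f, ∃ b : B, b ≠ 0 ∧ b • x = 0 := by
  subst hn
  obtain ⟨v, hc, hv⟩ := exists_finset_linearIndependent_of_le_finrank (R := B) (M := M) le_rfl
  let e : Fin (Module.finrank B M) ≃ v := (v.equivFinOfCardEq hc).symm
  have hv' := hv.comp e e.injective
  let f := Fintype.linearCombination B ((Subtype.val : v → M) ∘ e)
  have hf : Function.Injective f := by
    exact (LinearMap.ker_eq_bot.mp (by
      rw [LinearMap.ker_eq_bot']; intro c hc'; ext i
      exact Fintype.linearIndependent_iff.mp hv' c (by simpa [f, Fintype.linearCombination_apply] using hc') i))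
  refine ⟨f, hf, ?_⟩
  rw [← Module.finrank_eq_zero_iff]
  have h1 := Submodule.finrank_quotient_add_finrank (LinearMap.range f)
  rw [LinearMap.finrank_range_of_inj hf, Module.finrank_pi] at h1
  simpa using h1

theorem finrank_pow [Module.Finite R B] (n : ℕ) :
    Module.finrank R (Fin n → B) = n * Module.finrank R B := by
  induction n with
  | zero => rw [zero_mul]; exact Module.finrank_zero_of_subsingleton
  | succ n ih =>
    rw [(Fin.consLinearEquiv R (fun _ : Fin (n + 1) => B)).symm.finrank_eq]
    have h := Submodule.finrank_quotient_add_finrank (LinearMap.ker (LinearMap.fst R B (Fin n → B)))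
    rw [(LinearMap.quotKerEquivOfSurjective _ LinearMap.fst_surjective).finrank_eq, LinearMap.ker_fst,
      LinearMap.finrank_range_of_inj LinearMap.inr_injective, ih] at h
    rw [← h]
    ring

theorem finrank_tower [Module.Finite R B] [FaithfulSMul R B] [Module R M] [IsScalarTower R B M]
    [Module.Finite B M] :
    Module.finrank R M = Module.finrank R B * Module.finrank B M := by
  obtain ⟨f, hf, ht⟩ := exists_free_sub (B := B) (M := M) _ rfl
  have : Module.Finite R M := Module.Finite.trans B M
  let g := f.restrictScalars R
  have h1 := Submodule.finrank_quotient_add_finrank (LinearMap.range g)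
  have h2 : Module.finrank R (M ⧸ LinearMap.range g) = 0 := by
    rw [Module.finrank_eq_zero_iff]
    intro x
    obtain ⟨x, rfl⟩ := Submodule.Quotient.mk_surjective _ x
    obtain ⟨b, hb, hbx⟩ := ht (Submodule.Quotient.mk x)
    rw [← Submodule.Quotient.mk_smul, Submodule.Quotient.mk_eq_zero] at hbx
    obtain ⟨r, hr, b', hrb⟩ := (Algebra.IsAlgebraic.isAlgebraic (R := R) b).exists_nonzero_dvd
      (mem_nonZeroDivisors_of_ne_zero hb)
    refine ⟨r, hr, ?_⟩
    rw [← Submodule.Quotient.mk_smul, Submodule.Quotient.mk_eq_zero, ← algebraMap_smul B r x, hrb,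
      mul_comm, mul_smul]
    exact (LinearMap.range f).smul_mem b' hbx
  rw [h2, LinearMap.finrank_range_of_inj (f := g) hf] at h1
  rw [← h1, zero_add, mul_comm]
  exact finrank_pow _

end tower

section pser
open MvPowerSeries
variable {k : Type*} [Field k] {m : ℕ}

theorem mem_span_X {m : ℕ} (f : MvPowerSeries (Fin m) k) (hf : constantCoeff f = 0) :
    f ∈ Ideal.span (Set.range (X : Fin m → MvPowerSeries (Fin m) k)) := by
  classical
  let g : Fin m → MvPowerSeries (Fin m) k := fun i n =>
    if ∀ j < i, n j = 0 then coeff (n + Finsupp.single i 1) f else 0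
  have : f = ∑ i, g i * X i := by
    ext n
    rw [map_sum]
    have hg : ∀ i, coeff n (g i * X i) = if (n i ≠ 0 ∧ ∀ j < i, n j = 0) then coeff n f else 0 := by
      intro i
      rw [X, coeff_mul_monomial]
      by_cases hi : n i = 0
      · rw [if_neg, if_neg] 
        · simp [hi]
        · intro h
          have := h i
          simp [hi] at this
      · have hle : Finsupp.single i 1 ≤ n := by
          rw [Finsupp.single_le_iff]; omega
        rw [if_pos hle, mul_one]
        change (if ∀ j < i, (n - Finsupp.single i 1 : Fin m →₀ ℕ) j = 0 then coeff (n - Finsupp.single i 1 + Finsupp.single i 1) f else 0) = _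
        rw [tsub_add_cancel_of_le hle]
        have : (∀ j < i, (n - Finsupp.single i 1 : Fin m →₀ ℕ) j = 0) ↔ (n i ≠ 0 ∧ ∀ j < i, n j = 0) := by
          simp only [ne_eq, hi, not_false_eq_true, true_and]
          refine forall₂_congr fun j hj => ?_
          simp [Finsupp.single_apply, hj.ne']
        simp only [this]
    simp_rw [hg]
    by_cases hn : n = 0
    · subst hn
      simpa using hf
    · have hex : ∃ i, n i ≠ 0 := by
        by_contra! h
        exact hn (Finsupp.ext h)
      obtain ⟨i, hi, hmin⟩ := WellFounded.has_min (wellFounded_lt (α := Fin m)) {i | n i ≠ 0} hex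
      rw [Finset.sum_eq_single i]
      · rw [if_pos]
        refine ⟨hi, fun j hj => ?_⟩
        by_contra h
        exact hmin j h hj
      · intro j _ hji
        rw [if_neg]
        rintro ⟨h1, h2⟩
        have := hmin j h1
        exact hi (h2 i (lt_of_le_of_ne (not_lt.mp this) hji.symm))
      · simp
  rw [this]
  exact Ideal.sum_mem _ fun i _ => Ideal.mul_mem_left _ _ (Ideal.subset_span ⟨i, rfl⟩)

theorem dim_le (k : Type*) [Field k] (m : ℕ) : ringKrullDim (MvPowerSeries (Fin m) k) ≤ m := by
  have h : maximalIdeal (MvPowerSeries (Fin m) k) ≤ Ideal.span (Set.range (X : Fin m → MvPowerSeries (Fin m) k)) := by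
    intro f hf
    apply mem_span_X
    rw [mem_maximalIdeal, mem_nonunits_iff, isUnit_iff_constantCoeff] at hf
    simpa using hf
  have h' : maximalIdeal (MvPowerSeries (Fin m) k) = Ideal.span (Set.range (X : Fin m → MvPowerSeries (Fin m) k)) := by
    refine le_antisymm h (Ideal.span_le.mpr ?_)
    rintro _ ⟨i, rfl⟩
    change X i ∈ maximalIdeal _
    rw [mem_maximalIdeal, mem_nonunits_iff, isUnit_iff_constantCoeff]
    simp
  refine (ringKrullDim_le_spanFinrank_maximalIdeal _).trans ?_
  have : (maximalIdeal (MvPowerSeries (Fin m) k)).spanFinrank ≤ m := by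
    rw [h']
    refine (Submodule.spanFinrank_span_le_ncard_of_finite (Set.finite_range _)).trans ?_
    rw [← Set.image_univ]
    refine (Set.ncard_image_le (Set.finite_univ)).trans ?_
    simp
  exact_mod_cast this

/-- The key coefficient computation. -/
theorem coeff_key {p : ℕ} [Fact p.Prime] [CharP k p] (a b : Fin m → Fin p) (g : MvPowerSeries (Fin m) k) (n : Fin m →₀ ℕ) :
    coeff (p • n + Finsupp.equivFunOnFinite.symm (fun i => (b i : ℕ)))
      (g ^ p * monomial (Finsupp.equivFunOnFinite.symm (fun i => (a i : ℕ))) 1) =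
      if a = b then (coeff n g) ^ p else 0 := by
  classical
  have hp := (Fact.out : p.Prime)
  rw [coeff_mul_monomial, ← map_frobenius_expand p hp.ne_zero, mul_one]
  split_ifs with h1 h2 h2
  · subst h2
    rw [add_tsub_cancel_right, coeff_map, coeff_expand_smul]
    rfl
  · rw [coeff_map]
    obtain ⟨i, hi⟩ : ∃ i, a i ≠ b i := by
      by_contra! h
      exact h2 (funext h)
    rw [coeff_expand_of_not_dvd p hp.ne_zero g (i := i)]
    · simp
    · simp only [Finsupp.coe_tsub, Finsupp.coe_add, Finsupp.coe_smul, Pi.sub_apply, Pi.add_apply, Pi.smul_apply, smul_eq_mul, Finsupp.equivFunOnFinite_symm_apply_apply]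
      have hle := h1 i
      simp only [Finsupp.coe_add, Finsupp.coe_smul, Pi.add_apply, Pi.smul_apply, smul_eq_mul, Finsupp.equivFunOnFinite_symm_apply_apply] at hle
      intro hd
      have ha := (a i).2
      have hb := (b i).2
      apply hi
      have h3 : (p * n i + b i) ≡ a i [MOD p] := ((Nat.modEq_iff_dvd' hle).mpr hd).symm
      have h4 : (b i : ℕ) ≡ a i [MOD p] := by
        simpa [Nat.ModEq] using h3
      exact Fin.ext ((Nat.ModEq.eq_of_lt_of_lt h4 hb ha).symm)
  · subst h2
    exact absurd le_add_self h1
  · rfl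


theorem FrobRestrict.smul_eq {R : Type*} [CommRing R] {p : ℕ} [ExpChar R p] (r : R)
    (x : FrobRestrict R p 1 R) : r • x = (r ^ p * (show R from x) : R) := by
  change iterateFrobenius R p 1 r • (show R from x) = _
  rw [iterateFrobenius_one_apply]
  rfl

theorem frob_powerSeries (k : Type*) [Field k] (m p : ℕ) [Fact p.Prime] [CharP k p]
    [PerfectRing k p] [ExpChar (MvPowerSeries (Fin m) k) p] :
    Nonempty (((Fin m → Fin p) → MvPowerSeries (Fin m) k) ≃ₗ[MvPowerSeries (Fin m) k]
      FrobRestrict (MvPowerSeries (Fin m) k) p 1 (MvPowerSeries (Fin m) k)) := by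
  classical
  have hp := (Fact.out : p.Prime)
  let mon : (Fin m → Fin p) → MvPowerSeries (Fin m) k := fun a =>
    monomial (Finsupp.equivFunOnFinite.symm (fun i => (a i : ℕ))) 1
  let Φ : ((Fin m → Fin p) → MvPowerSeries (Fin m) k) →ₗ[MvPowerSeries (Fin m) k]
      FrobRestrict (MvPowerSeries (Fin m) k) p 1 (MvPowerSeries (Fin m) k) :=
    Fintype.linearCombination (MvPowerSeries (Fin m) k)
      (M := FrobRestrict (MvPowerSeries (Fin m) k) p 1 (MvPowerSeries (Fin m) k)) mon
  have hΦ : ∀ c, Φ c = (∑ a, (c a) ^ p * mon a : MvPowerSeries (Fin m) k) := by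
    intro c
    let monF : (Fin m → Fin p) →
      FrobRestrict (MvPowerSeries (Fin m) k) p 1 (MvPowerSeries (Fin m) k) := mon
    have h1 : Φ c = ∑ a, c a • monF a := Fintype.linearCombination_apply _ _ _
    have h2 : ∀ a, c a • monF a = (c a ^ p * mon a : MvPowerSeries (Fin m) k) :=
      fun a => FrobRestrict.smul_eq _ _
    rw [h1]
    exact Finset.sum_congr rfl fun a _ => h2 a
  have hco : ∀ c n (b : Fin m → Fin p),
      coeff (p • n + Finsupp.equivFunOnFinite.symm (fun i => (b i : ℕ)))
        (show MvPowerSeries (Fin m) k from Φ c) = (coeff n (c b)) ^ p := by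
    intro c n b
    rw [hΦ]
    change coeff _ (∑ a, (c a) ^ p * mon a : MvPowerSeries (Fin m) k) = _
    rw [map_sum]
    simp only [mon, coeff_key]
    simp
  have hdec : ∀ d : Fin m →₀ ℕ, ∃ (n : Fin m →₀ ℕ) (b : Fin m → Fin p),
      d = p • n + Finsupp.equivFunOnFinite.symm (fun i => (b i : ℕ)) := by
    intro d
    refine ⟨Finsupp.equivFunOnFinite.symm (fun i => d i / p),
      fun i => ⟨d i % p, Nat.mod_lt _ hp.pos⟩, ?_⟩
    ext i
    simp [Nat.div_add_mod]
  refine ⟨LinearEquiv.ofBijective Φ ⟨?_, ?_⟩⟩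
  · rw [← LinearMap.ker_eq_bot, LinearMap.ker_eq_bot']
    intro c hc
    funext b
    ext n
    have := hco c n b
    rw [hc] at this
    change coeff _ (0 : MvPowerSeries (Fin m) k) = _ at this
    rw [map_zero] at this
    simpa using (pow_eq_zero_iff hp.ne_zero).mp this.symm
  · intro f
    let c : (Fin m → Fin p) → MvPowerSeries (Fin m) k := fun b n =>
      (frobeniusEquiv k p).symm (coeff (p • n + Finsupp.equivFunOnFinite.symm (fun i => (b i : ℕ)))
        (show MvPowerSeries (Fin m) k from f))
    refine ⟨c, ?_⟩
    change (show MvPowerSeries (Fin m) k from Φ c) = (show MvPowerSeries (Fin m) k from f)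
    ext d
    obtain ⟨n, b, rfl⟩ := hdec d
    rw [hco]
    exact frobeniusEquiv_symm_pow_p k p _

end pser

def BaseCopy (A : Type*) : Type _ := A

instance (A : Type*) [CommRing A] : CommRing (BaseCopy A) := inferInstanceAs (CommRing A)

instance (A : Type*) [CommRing A] [IsDomain A] : IsDomain (BaseCopy A) := inferInstanceAs (IsDomain A)

theorem finrank_frob {A S : Type*} [CommRing A] [IsDomain A] [CommRing S] [IsDomain S]
    (φ : A →+* S) (hφ : Function.Injective φ) (hfin : φ.Finite) (p : ℕ) [ExpChar A p] [ExpChar S p]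
    [Module.Finite A (FrobRestrict A p 1 A)] :
    Module.Finite S (FrobRestrict S p 1 S) ∧
    Module.finrank S (FrobRestrict S p 1 S) = Module.finrank A (FrobRestrict A p 1 A) := by
  have key : ∀ r : A, φ (iterateFrobenius A p 1 r) = (φ r) ^ p := fun r => by
    rw [iterateFrobenius_one_apply, map_pow]
  let : Algebra (BaseCopy A) S := RingHom.toAlgebra (R := BaseCopy A) φ
  let : Algebra (BaseCopy A) A := RingHom.toAlgebra (R := BaseCopy A) (iterateFrobenius A p 1)
  let : Module A (FrobRestrict S p 1 S) := Module.compHom S φ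
  let : Module (BaseCopy A) (FrobRestrict S p 1 S) :=
    Module.compHom (FrobRestrict S p 1 S) (algebraMap (BaseCopy A) S)
  have : Module.Finite (BaseCopy A) S := hfin
  have : FaithfulSMul (BaseCopy A) S := (faithfulSMul_iff_algebraMap_injective _ _).mpr hφ
  have : FaithfulSMul (BaseCopy A) A := (faithfulSMul_iff_algebraMap_injective _ _).mpr
    (iterateFrobenius_inj A p 1)
  have : IsScalarTower (BaseCopy A) S (FrobRestrict S p 1 S) :=
    IsScalarTower.of_algebraMap_smul fun r x => rfl
  have : IsScalarTower (BaseCopy A) A (FrobRestrict S p 1 S) :=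
    IsScalarTower.of_algebraMap_smul fun r x => by
      change φ (iterateFrobenius A p 1 r) * (show S from x) = (φ r : S) • x
      rw [FrobRestrict.smul_eq]
      exact congrArg (fun t : S => t * (show S from x)) (key r)
  -- `FrobRestrict A p 1 A` versus `A` over the copy of the base
  have e1 : Module.finrank (BaseCopy A) A = Module.finrank A (FrobRestrict A p 1 A) ∧
      Module.Finite (BaseCopy A) A := by
    exact ⟨rfl, ‹Module.Finite A (FrobRestrict A p 1 A)›⟩
  have e2 : Module.finrank A (FrobRestrict S p 1 S) = Module.finrank (BaseCopy A) S := rfl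
  have : Module.Finite (BaseCopy A) A := e1.2
  have : Module.Finite A (FrobRestrict S p 1 S) := hfin
  have : Module.Finite (BaseCopy A) (FrobRestrict S p 1 S) := Module.Finite.trans A _
  have : Module.Finite S (FrobRestrict S p 1 S) := Module.Finite.of_restrictScalars_finite (BaseCopy A) _ _
  refine ⟨this, ?_⟩
  have h1 := finrank_tower (R := BaseCopy A) (B := A) (M := FrobRestrict S p 1 S)
  have h2 := finrank_tower (R := BaseCopy A) (B := S) (M := FrobRestrict S p 1 S)
  rw [h1, e1.1, e2, mul_comm] at h2
  have : Module.finrank (BaseCopy A) S ≠ 0 := by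
    rw [Ne, Module.finrank_eq_zero_iff]
    intro h
    obtain ⟨a, ha, h⟩ := h 1
    rw [← algebraMap_smul S a (1 : S)] at h
    simp at h
    exact ha h
  exact (Nat.eq_of_mul_eq_mul_left (Nat.pos_of_ne_zero this) h2).symm


theorem exists_evalHom {S : Type*} [CommRing S] (J : Ideal S) (hJ : IsAdicComplete J S)
    {k : Type*} [Field k] (τ : k →+* S) {m : ℕ} (x : Fin m → S) (hx : ∀ i, x i ∈ J) :
    ∃ φ : MvPowerSeries (Fin m) k →+* S, (∀ c, φ (MvPowerSeries.C c) = τ c) ∧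
      ∀ i, φ (MvPowerSeries.X i) = x i := by
  let _ : WithIdeal S := ⟨J⟩
  let _ : UniformSpace k := ⊥
  have : DiscreteUniformity k := ⟨rfl⟩
  have hadic : IsAdic J := rfl
  obtain ⟨_, _⟩ := hadic.isAdicComplete_iff.mp hJ
  have hc : Continuous τ := continuous_of_discreteTopology
  have he : MvPowerSeries.HasEval x := by
    refine ⟨fun i => ?_, ?_⟩
    · rw [IsTopologicallyNilpotent, hadic.hasBasis_nhds_zero.tendsto_right_iff]
      intro n _
      filter_upwards [Filter.eventually_ge_atTop n] with l hl
      exact Ideal.pow_le_pow_right hl (Ideal.pow_mem_pow (hx i) l)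
    · simp
  refine ⟨MvPowerSeries.eval₂Hom hc he, ?_, ?_⟩
  · intro c
    rw [MvPowerSeries.coe_eval₂Hom, MvPowerSeries.eval₂_C]
  · intro c
    rw [MvPowerSeries.coe_eval₂Hom, MvPowerSeries.eval₂_X]

theorem isPrecomplete_pi {A : Type*} [CommRing A] (I : Ideal A) [IsPrecomplete I A] (r : ℕ) :
    IsPrecomplete I (Fin r → A) := by
  refine ⟨fun f hf => ?_⟩
  have h1 : ∀ i, ∃ L : A, ∀ n, f n i ≡ L [SMOD (I ^ n • ⊤ : Submodule A A)] := by
    intro i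
    refine IsPrecomplete.prec ‹_› (f := fun n => f n i) ?_
    intro a b hab
    have := hf hab
    have h2 := this.map (LinearMap.proj i : (Fin r → A) →ₗ[A] A)
    rw [Submodule.map_smul''] at h2
    exact h2.mono (Submodule.smul_mono le_rfl le_top)
  choose L hL using h1
  refine ⟨L, fun n => ?_⟩
  rw [SModEq.sub_mem]
  rw [← Finset.univ_sum_single (f n - L)]
  refine Submodule.sum_mem _ fun i _ => ?_
  have h3 := hL i n
  rw [SModEq.sub_mem] at h3
  have h4 : Pi.single i ((f n - L) i) = LinearMap.single A (fun _ : Fin r => A) i (f n i - L i) := rfl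
  rw [h4]
  have h5 := Submodule.mem_map_of_mem (f := LinearMap.single A (fun _ : Fin r => A) i) h3
  rw [Submodule.map_smul''] at h5
  exact Submodule.smul_mono le_rfl le_top h5


/-- finite generation modulo powers of the maximal ideal. -/
theorem exists_fg_sup {A S : Type*} [CommRing A] [CommRing S] [Algebra A S]
    [IsNoetherianRing S] [IsLocalRing S]
    (hτ : ∀ s : S, ∃ a : A, s - algebraMap A S a ∈ maximalIdeal S) (n : ℕ) :
    ∃ N : Submodule A S, N.FG ∧ N ⊔ (maximalIdeal S ^ n).restrictScalars A = ⊤ := by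
  induction n with
  | zero => exact ⟨⊥, Submodule.fg_bot, by simp⟩
  | succ n ih =>
    obtain ⟨N, hN, hT⟩ := ih
    obtain ⟨G, hG⟩ := (inferInstance : IsNoetherian S S).noetherian (maximalIdeal S ^ n)
    refine ⟨N ⊔ Submodule.span A (G : Set S), hN.sup ⟨G, rfl⟩, ?_⟩
    rw [sup_assoc]
    refine top_le_iff.mp (hT.symm.le.trans (sup_le_sup le_rfl ?_))
    intro v hv
    have hv' : v ∈ Submodule.span S (G : Set S) := by rw [hG]; exact hv
    obtain ⟨f, -, rfl⟩ := Submodule.mem_span_finset.mp hv'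
    refine Submodule.sum_mem _ fun g hg => ?_
    obtain ⟨a, ha⟩ := hτ (f g)
    have : f g • g = a • g + (f g - algebraMap A S a) * g := by
      rw [Algebra.smul_def a g, smul_eq_mul]; ring
    rw [this]
    refine Submodule.add_mem_sup (Submodule.smul_mem _ _ (Submodule.subset_span hg)) ?_
    change _ ∈ maximalIdeal S ^ (n + 1)
    rw [pow_succ']
    refine Ideal.mul_mem_mul ha ?_
    rw [← hG]
    exact Submodule.subset_span hg

theorem finite_of_sop {A S : Type*} [CommRing A] [CommRing S] [Algebra A S]
    [IsNoetherianRing S] [IsLocalRing S] (I : Ideal A) [IsPrecomplete I A]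
    (hτ : ∀ s : S, ∃ a : A, s - algebraMap A S a ∈ maximalIdeal S) (n : ℕ)
    (hn : maximalIdeal S ^ n ≤ I.map (algebraMap A S))
    (hI : I.map (algebraMap A S) ≠ ⊤) : Module.Finite A S := by
  obtain ⟨N, hN, hT⟩ := exists_fg_sup (A := A) hτ n
  obtain ⟨r, v, hv⟩ := Submodule.fg_iff_exists_fin_generating_family.mp hN
  have := isPrecomplete_pi I r
  have : IsHausdorff (I.map (algebraMap A S)) S := IsHausdorff.of_isLocalRing _ _ hI
  have : IsHausdorff I S := IsHausdorff.map_algebraMap_iff.mp this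
  refine Module.Finite.of_surjective (Fintype.linearCombination A v)
    (surjective_of_mkQ_comp_surjective (I := I) ?_)
  rw [← LinearMap.range_eq_top, LinearMap.range_comp, Fintype.range_linearCombination, hv,
    Submodule.map_mkQ_eq_top, Ideal.smul_top_eq_map, sup_comm]
  exact top_le_iff.mp (hT.symm.le.trans (sup_le_sup le_rfl hn))



theorem dim_le_of_finite {A S : Type*} [CommRing A] [CommRing S] [Algebra A S]
    [Module.Finite A S] : ringKrullDim S ≤ ringKrullDim A := by
  refine Order.krullDim_le_of_strictMono (PrimeSpectrum.comap (algebraMap A S)) ?_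
  intro P Q hPQ
  have : P.asIdeal < Q.asIdeal := hPQ
  have h := Ideal.IsIntegral.comap_lt_comap (R := A) this
  exact h

theorem injective_of_finite {A S : Type*} [CommRing A] [IsDomain A] [CommRing S] (φ : A →+* S)
    (hφ : φ.Finite) (m : ℕ) (hA : ringKrullDim A ≤ m) (hS : ringKrullDim S = m) :
    Function.Injective φ := by
  rw [injective_iff_map_eq_zero]
  intro a ha
  by_contra h0
  let ψ : A ⧸ Ideal.span {a} →+* S := Ideal.Quotient.lift _ φ (by
    intro b hb
    obtain ⟨c, rfl⟩ := Ideal.mem_span_singleton'.mp hb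
    rw [map_mul, ha, mul_zero])
  let _ := ψ.toAlgebra
  have hfin : ψ.Finite := RingHom.Finite.of_comp_finite (f := Ideal.Quotient.mk (Ideal.span {a})) hφ
  have : Module.Finite (A ⧸ Ideal.span {a}) S := hfin
  have h1 : ringKrullDim S ≤ ringKrullDim (A ⧸ Ideal.span {a}) := dim_le_of_finite
  have h2 := ringKrullDim_quotient_succ_le_of_nonZeroDivisor (mem_nonZeroDivisors_of_ne_zero h0)
  have h3 : ((m : WithBot ℕ∞)) + 1 ≤ m := by
    refine le_trans ?_ (h2.trans hA)
    rw [← hS]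
    gcongr
  have h4 : ((m + 1 : ℕ) : WithBot ℕ∞) ≤ (m : ℕ) := by exact_mod_cast h3
  have h5 : m + 1 ≤ m := by exact_mod_cast h4
  omega

theorem exists_sop {S : Type*} [CommRing S] [IsNoetherianRing S] [IsLocalRing S]
    (m : ℕ) (hdim : ringKrullDim S = m) : ∃ x : Fin m → S, (∀ i, x i ∈ maximalIdeal S) ∧
      ∃ N, maximalIdeal S ^ N ≤ Ideal.span (Set.range x) := by
  obtain ⟨s, hs, hc⟩ := Ideal.exists_finset_card_eq_height_of_isNoetherianRing (maximalIdeal S)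
  have h1 := IsLocalRing.maximalIdeal_height_eq_ringKrullDim (R := S)
  rw [← hc, hdim] at h1
  have h2 : s.card = m := by exact_mod_cast h1
  let e := (s.equivFinOfCardEq h2).symm
  have hr : Set.range (fun i => (e i : S)) = s := by
    change Set.range (Subtype.val ∘ e) = _
    rw [e.surjective.range_comp]
    simp
  refine ⟨fun i => e i, fun i => hs.1.2 (Ideal.subset_span (e i).2), ?_⟩
  rw [hr]
  have hrad : (Ideal.span (s : Set S)).radical = maximalIdeal S := by
    refine le_antisymm ?_ ?_
    · exact (Ideal.IsPrime.radical_le_iff inferInstance).mpr hs.1.2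
    · rw [Ideal.radical_eq_sInf]
      refine le_sInf ?_
      rintro J ⟨hJ, hJp⟩
      exact hs.2 ⟨hJp, hJ⟩ (le_maximalIdeal hJp.ne_top)
  obtain ⟨N, hN⟩ := Ideal.exists_radical_pow_le_of_fg (Ideal.span (s : Set S))
    (IsNoetherian.noetherian _)
  rw [hrad] at hN
  exact ⟨N, hN⟩

theorem exists_normalization (S : Type*) [CommRing S] [IsNoetherianRing S] [IsLocalRing S]
    (hcomplete : IsAdicComplete (maximalIdeal S) S)
    (τ : ResidueField S →+* S) (hτ : ∀ c, residue S (τ c) = c)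
    (m : ℕ) (hdim : ringKrullDim S = m) :
    ∃ φ : MvPowerSeries (Fin m) (ResidueField S) →+* S, Function.Injective φ ∧ φ.Finite := by
  obtain ⟨x, hx, N, hN⟩ := exists_sop m hdim
  obtain ⟨φ, hC, hX⟩ := exists_evalHom (maximalIdeal S) hcomplete τ x hx
  have hmap : (Ideal.span (Set.range MvPowerSeries.X)).map φ = Ideal.span (Set.range x) := by
    rw [Ideal.map_span, ← Set.range_comp]
    congr 2
    exact funext hX
  have hfin : φ.Finite := by
    let _ := φ.toAlgebra
    refine finite_of_sop (A := MvPowerSeries (Fin m) (ResidueField S)) (S := S)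
      (Ideal.span (Set.range MvPowerSeries.X)) ?_ N ?_ ?_
    · intro s
      refine ⟨MvPowerSeries.C (residue S s), ?_⟩
      change s - φ _ ∈ _
      rw [hC, ← residue_eq_zero_iff, map_sub, hτ, sub_self]
    · change _ ≤ Ideal.map φ _
      rw [hmap]; exact hN
    · change Ideal.map φ _ ≠ _
      rw [hmap]
      intro h
      have : Ideal.span (Set.range x) ≤ maximalIdeal S := Ideal.span_le.mpr (by
        rintro _ ⟨i, rfl⟩; exact hx i)
      rw [h] at this
      exact (maximalIdeal.isMaximal S).ne_top (top_le_iff.mp this)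
  have : IsDomain (MvPowerSeries (Fin m) (ResidueField S)) := NoZeroDivisors.to_isDomain _
  exact ⟨φ, injective_of_finite φ hfin m (dim_le _ m) hdim, hfin⟩


theorem frob_rank (S : Type*) [CommRing S] [IsDomain S] [IsNoetherianRing S] [IsLocalRing S]
    (hcomplete : IsAdicComplete (maximalIdeal S) S)
    (p : ℕ) [Fact p.Prime] [CharP S p] [CharP (ResidueField S) p]
    [ExpChar (ResidueField S) p] [PerfectRing (ResidueField S) p]
    (m : ℕ) (hdim : ringKrullDim S = m) :
    Module.Finite S (FrobRestrict S p 1 S) ∧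
      Module.finrank S (FrobRestrict S p 1 S) = p ^ m := by
  obtain ⟨τ, hτ⟩ := exists_coeffField S hcomplete p
  obtain ⟨φ, hinj, hfin⟩ := exists_normalization S hcomplete τ hτ m hdim
  have : IsDomain (MvPowerSeries (Fin m) (ResidueField S)) := NoZeroDivisors.to_isDomain _
  have : CharP (MvPowerSeries (Fin m) (ResidueField S)) p :=
    charP_of_injective_algebraMap
      (algebraMap (ResidueField S) (MvPowerSeries (Fin m) (ResidueField S))).injective p
  have : ExpChar (MvPowerSeries (Fin m) (ResidueField S)) p := ExpChar.prime Fact.out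
  obtain ⟨e⟩ := frob_powerSeries (ResidueField S) m p
  have : Module.Finite (MvPowerSeries (Fin m) (ResidueField S))
    (FrobRestrict (MvPowerSeries (Fin m) (ResidueField S)) p 1
      (MvPowerSeries (Fin m) (ResidueField S))) := Module.Finite.equiv e
  obtain ⟨h1, h2⟩ := finrank_frob φ hinj hfin p
  refine ⟨h1, h2.trans ?_⟩
  rw [← e.finrank_eq, Module.finrank_pi]
  simp

theorem generic_rank {S M : Type*} [CommRing S] [IsDomain S] [AddCommGroup M] [Module S M]
    [Module.Finite S M] {p m : ℕ} (h : Module.finrank S M = p ^ m) :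
    Module.rank (FractionRing S) (TensorProduct S (FractionRing S) M) = p ^ m := by
  have h1 := Module.finrank_eq_rank S M
  have h2 := IsLocalizedModule.lift_rank_eq (nonZeroDivisors S)
    (TensorProduct.mk S (FractionRing S) M 1) le_rfl
  have h3 := IsLocalization.rank_eq (FractionRing S) (nonZeroDivisors S) le_rfl
    (N := TensorProduct S (FractionRing S) M)
  rw [← h1, h] at h2
  rw [Cardinal.lift_natCast, Cardinal.lift_eq_nat_iff] at h2
  rw [h3, h2]
  push_cast
  rfl

theorem supportDim_lt_of_torsion {S Q : Type*} [CommRing S] [IsDomain S] [AddCommGroup Q]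
    [Module S Q] [Module.Finite S Q] (m : ℕ) (hdim : ringKrullDim S = m)
    (ht : ∀ x : Q, ∃ b : S, b ≠ 0 ∧ b • x = 0) :
    Order.krullDim (Module.support S Q) < (m : WithBot (WithTop ℕ)) := by
  classical
  obtain ⟨G, hG⟩ := (Module.Finite.fg_top : (⊤ : Submodule S Q).FG)
  choose b hb0 hb using ht
  let a := ∏ g ∈ G, b g
  have ha : a ≠ 0 := Finset.prod_ne_zero_iff.mpr fun g _ => hb0 g
  have hann : a ∈ Module.annihilator S Q := by
    rw [← Submodule.annihilator_top, ← hG, Submodule.mem_annihilator_span]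
    rintro ⟨g, hg⟩
    obtain ⟨c, hc⟩ := Finset.dvd_prod_of_mem b hg
    change a • g = 0
    rw [show a = b g * c from hc, mul_comm, mul_smul, hb, smul_zero]
  have h1 := Module.supportDim_eq_ringKrullDim_quotient_annihilator S Q
  change Module.supportDim S Q < _
  rw [h1]
  have h2 := ringKrullDim_quotient_succ_le_of_nonZeroDivisor (mem_nonZeroDivisors_of_ne_zero ha)
  have h3 : ringKrullDim (S ⧸ Module.annihilator S Q) ≤ ringKrullDim (S ⧸ Ideal.span {a}) :=
    ringKrullDim_le_of_surjective
      (Ideal.Quotient.factor ((Ideal.span_singleton_le_iff_mem _).mpr hann))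
      (Ideal.Quotient.factor_surjective _)
  rw [hdim] at h2
  refine lt_of_le_of_lt h3 ?_
  change ringKrullDim (S ⧸ Ideal.span {a}) < ((m : ℕ) : WithBot ℕ∞)
  generalize ringKrullDim (S ⧸ Ideal.span {a}) = d at h2
  rcases d with _ | _ | d
  · exact WithBot.bot_lt_coe _
  · have h4 : (((⊤ : ℕ∞) + 1 : ℕ∞) : WithBot ℕ∞) ≤ ((m : ℕ∞) : WithBot ℕ∞) := h2
    rw [WithBot.coe_le_coe, top_add, top_le_iff] at h4
    exact absurd h4 (ENat.coe_ne_top m)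
  · have : ((d + 1 : ℕ) : WithBot ℕ∞) ≤ (m : ℕ) := h2
    have : d + 1 ≤ m := by exact_mod_cast this
    change ((d : ℕ) : WithBot ℕ∞) < (m : ℕ)
    exact_mod_cast this


/-- For a complete Noetherian local domain `S` of prime characteristic `p` with perfect
residue field and Krull dimension `m`, the Frobenius restriction `ᶠS` of `S` is a
torsion-free `S`-module of generic rank `p^m`; consequently there is a short exact
sequence `0 → S^{p^m} → ᶠS → Q → 0` with `Q` finitely generated of dimension `< m`. -/
theorem stmt17 (S : Type*) [CommRing S] [IsDomain S] [IsNoetherianRing S] [IsLocalRing S]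
    (hcomplete : IsAdicComplete (maximalIdeal S) S)
    (p : ℕ) [Fact p.Prime] [CharP S p]
    [ExpChar (ResidueField S) p] [PerfectRing (ResidueField S) p]
    (m : ℕ) (hdim : ringKrullDim S = m) :
    NoZeroSMulDivisors S (FrobRestrict S p 1 S) ∧
      Module.rank (FractionRing S)
          (TensorProduct S (FractionRing S) (FrobRestrict S p 1 S)) = p ^ m ∧
      ∃ f : (Fin (p ^ m) → S) →ₗ[S] FrobRestrict S p 1 S,
        Function.Injective f ∧
          Module.Finite S (FrobRestrict S p 1 S ⧸ LinearMap.range f) ∧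
          Order.krullDim
              (Module.support S (FrobRestrict S p 1 S ⧸ LinearMap.range f)) <
            (m : WithBot (WithTop ℕ)) := by
  have hp := (Fact.out : p.Prime)
  have : CharP (ResidueField S) p := by
    rcases ‹ExpChar (ResidueField S) p› with _ | _
    · exact absurd rfl hp.ne_one
    · assumption
  have htf : NoZeroSMulDivisors S (FrobRestrict S p 1 S) := by
    refine ⟨fun {r x} h => ?_⟩
    rw [FrobRestrict.smul_eq] at h
    have h' : r ^ p * (show S from x) = 0 := h
    rcases mul_eq_zero.mp h' with h1 | h1
    · exact Or.inl (pow_eq_zero_iff hp.ne_zero |>.mp h1)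
    · exact Or.inr h1
  obtain ⟨hfin, hrank⟩ := frob_rank S hcomplete p m hdim
  refine ⟨htf, generic_rank hrank, ?_⟩
  obtain ⟨f, hf, ht⟩ := exists_free_sub (p ^ m) hrank
  refine ⟨f, hf, inferInstance, ?_⟩
  exact supportDim_lt_of_torsion m hdim ht
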